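/- If X is a vacuously normal topological space, Y is a normal topological space, and the projection π_Y : X × Y → Y is a closed map, then the product X × Y is normal. -/

import Mathlib

/-- A space is vacuously normal if it contains no pair of disjoint
nonempty closed subsets. -/
def VacuouslyNormal (X : Type*) [TopologicalSpace X] : Prop :=
  ∀ F H : Set X, IsClosed F → IsClosed H → F.Nonempty → H.Nonempty → ¬ Disjoint F H

theorem normal_prod_of_vacuouslyNormal_of_closed_proj
    (X Y : Type*) [TopologicalSpace X] [TopologicalSpace Y]
    (hX : VacuouslyNormal X) (hY : NormalSpace Y)
    (hproj : IsClosedMap (Prod.snd : X × Y → Y)) :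
    NormalSpace (X × Y) := by
  refine ⟨fun A B hA hB hAB => ?_⟩
  -- The fibres of `A` and `B` over a common point would be disjoint nonempty closed sets in `X`,
  -- so the closed projections of `A` and `B` are disjoint and can be separated in `Y`.
  have hdisj : Disjoint (Prod.snd '' A) (Prod.snd '' B) := by
    rw [Set.disjoint_left]
    rintro y ⟨⟨a, y₁⟩, ha, rfl⟩ ⟨⟨b, y₂⟩, hb, h⟩
    obtain rfl : y₂ = y₁ := h
    have hc : Continuous fun x : X => (x, y₂) := by fun_prop
    exact hX _ _ (hA.preimage hc) (hB.preimage hc) ⟨a, ha⟩ ⟨b, hb⟩ (hAB.preimage _)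
  obtain ⟨U, V, hU, hV, hAU, hBV, hUV⟩ := hY.normal _ _ (hproj A hA) (hproj B hB) hdisj
  exact ⟨_, _, hU.preimage continuous_snd, hV.preimage continuous_snd,
    Set.image_subset_iff.1 hAU, Set.image_subset_iff.1 hBV, hUV.preimage _⟩
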